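/- arXiv:math/0505037 — 2 statements merged into one kernel-verified Lean document; each statement's English description precedes it below -/
import Mathlib

section
/- Let k be a field, σ ∈ k(t) nonconstant, f ∈ k(t) nonzero, ν ∈ ℤ, and suppose (f ∘ σ) · (σ')^ν = f. Let a ∈ k be a fixed point of σ at which σ is regular (σ.denom.eval a ≠ 0 and σ(a) = a) and which is neither a zero nor a pole of f (f.num.eval a ≠ 0 and f.denom.eval a ≠ 0). Then the multiplier μ := σ'(a) (the evaluation at a of the derivative of σ) satisfies μ^ν = 1. In particular, if ν ≠ 0, every fixed point of σ whose multiplier is not a root of unity is a zero or a pole of f. -/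
/-!
Everything happens in the local ring of rational functions regular at `a`, on which evaluation at
`a` is a ring homomorphism. The relation `HasVal a r c` says that `r` is regular at `a` with value
`c`. Since `σ(a) = a`, both `f` and `f ∘ σ` are regular at `a` with the same nonzero value, so
`σ' ^ ν = f / (f ∘ σ)` has value `1` at `a`. The derivative `σ'` is regular at `a` with value `μ`,
so for `ν = n ≥ 0` uniqueness of values gives `μ ^ n = 1`; for `ν = -n` the same argument applies
to the inverse of `σ' ^ ν`, whose value is again `1`.
-/

open Polynomial

/-- Composition of rational functions: `f ∘ g = f.num(g) / f.denom(g)`. -/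
noncomputable def ratComp {k : Type*} [Field k] (f g : RatFunc k) : RatFunc k :=
  Polynomial.aeval g f.num / Polynomial.aeval g f.denom

/-- The formal derivative on `RatFunc k`, extending polynomial differentiation. -/
noncomputable def ratDeriv {k : Type*} [Field k] (f : RatFunc k) : RatFunc k :=
  algebraMap (Polynomial k) (RatFunc k)
      (Polynomial.derivative f.num * f.denom - f.num * Polynomial.derivative f.denom) /
    algebraMap (Polynomial k) (RatFunc k) (f.denom ^ 2)

/-- The order of a rational function at a point `a`. -/
noncomputable def ratOrd {k : Type*} [Field k] (a : k) (f : RatFunc k) : ℤ :=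
  (f.num.rootMultiplicity a : ℤ) - (f.denom.rootMultiplicity a : ℤ)

/-- A rational function is nonconstant. -/
def RatFuncNonconst {k : Type*} [Field k] (σ : RatFunc k) : Prop :=
  ¬ ∃ c : k, σ = RatFunc.C c

/-- The degree of a rational function. -/
noncomputable def ratDegree {k : Type*} [Field k] (f : RatFunc k) : ℕ :=
  max f.num.natDegree f.denom.natDegree

/-- The rational function `r` is regular at `a` and takes the value `c` there: `r = p / q` for some
polynomials (not necessarily coprime) with `q(a) ≠ 0` and `p(a) = c * q(a)`. -/
def HasVal {k : Type*} [Field k] (a : k) (r : RatFunc k) (c : k) : Prop :=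
  ∃ p q : k[X], q.eval a ≠ 0 ∧
    r * algebraMap k[X] (RatFunc k) q = algebraMap k[X] (RatFunc k) p ∧
    p.eval a = c * q.eval a

namespace HasVal

variable {k : Type*} [Field k] {a : k} {r s : RatFunc k} {c d : k}

theorem const (a c : k) : HasVal a (algebraMap k (RatFunc k) c) c :=
  ⟨Polynomial.C c, 1, by simp, by simp, by simp⟩

theorem add (hr : HasVal a r c) (hs : HasVal a s d) : HasVal a (r + s) (c + d) := by
  obtain ⟨p, q, hq, h, hp⟩ := hr
  obtain ⟨p', q', hq', h', hp'⟩ := hs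
  refine ⟨p * q' + p' * q, q * q', by simp [hq, hq'], ?_, ?_⟩
  · simp only [map_add, map_mul, ← h, ← h']; ring
  · simp only [eval_add, eval_mul, hp, hp']; ring

theorem mul (hr : HasVal a r c) (hs : HasVal a s d) : HasVal a (r * s) (c * d) := by
  obtain ⟨p, q, hq, h, hp⟩ := hr
  obtain ⟨p', q', hq', h', hp'⟩ := hs
  refine ⟨p * p', q * q', by simp [hq, hq'], ?_, ?_⟩
  · simp only [map_mul, ← h, ← h']; ring
  · simp only [eval_mul, hp, hp']; ring

theorem pow (hr : HasVal a r c) (n : ℕ) : HasVal a (r ^ n) (c ^ n) := by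
  induction n with
  | zero => simpa using const a 1
  | succ n ih => simpa only [pow_succ] using ih.mul hr

theorem unique (hr : HasVal a r c) (hs : HasVal a r d) : c = d := by
  obtain ⟨p, q, hq, h, hp⟩ := hr
  obtain ⟨p', q', hq', h', hp'⟩ := hs
  have key : p * q' = p' * q := by
    apply RatFunc.algebraMap_injective k
    simp only [map_mul, ← h, ← h']; ring
  have := congrArg (Polynomial.eval a) key
  simp only [eval_mul, hp, hp'] at this
  apply mul_right_cancel₀ (mul_ne_zero hq hq')
  linear_combination this

theorem ne_zero (hr : HasVal a r c) (hc : c ≠ 0) : r ≠ 0 := by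
  rintro rfl
  exact hc (hr.unique (by simpa using const a 0))

theorem inv (hr : HasVal a r c) (hc : c ≠ 0) : HasVal a r⁻¹ c⁻¹ := by
  have hr0 := hr.ne_zero hc
  obtain ⟨p, q, hq, h, hp⟩ := hr
  refine ⟨q, p, by simp [hp, hc, hq], ?_, ?_⟩
  · rw [← h, inv_mul_cancel_left₀ hr0]
  · rw [hp, inv_mul_cancel_left₀ hc]

theorem div (hr : HasVal a r c) (hs : HasVal a s d) (hd : d ≠ 0) : HasVal a (r / s) (c / d) := by
  simpa only [div_eq_mul_inv] using hr.mul (hs.inv hd)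

theorem aeval (hr : HasVal a r c) (p : k[X]) :
    HasVal a (Polynomial.aeval r p) (p.eval c) := by
  induction p using Polynomial.induction_on' with
  | add p q hp hq => simpa using hp.add hq
  | monomial n b =>
    rw [Polynomial.aeval_monomial, Polynomial.eval_monomial]
    exact (const a b).mul (hr.pow n)

theorem of_polynomial (a : k) (p : k[X]) :
    HasVal a (algebraMap k[X] (RatFunc k) p) (p.eval a) :=
  ⟨p, 1, by simp, by simp, by simp⟩

theorem of_denom_ne_zero (h : r.denom.eval a ≠ 0) :
    HasVal a r (r.num.eval a / r.denom.eval a) := by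
  simpa only [RatFunc.num_div_denom] using
    (of_polynomial a r.num).div (of_polynomial a r.denom) h

/-- `RatFunc.eval` has no junk value here: the reduced denominator of `r` divides any other
denominator of `r`, so it does not vanish at `a`. -/
theorem eval_eq (hr : HasVal a r c) : RatFunc.eval (RingHom.id k) a r = c := by
  have hden : r.denom.eval a ≠ 0 := by
    obtain ⟨p, q, hq, h, -⟩ := hr
    have hq0 : q ≠ 0 := by rintro rfl; simp at hq
    have hdvd : r.denom ∣ q :=
      (RatFunc.denom_dvd hq0).2 ⟨p, by rw [← h, mul_div_cancel_right₀]; simpa using hq0⟩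
    exact fun h0 => hq (Polynomial.eval_eq_zero_of_dvd_of_eval_eq_zero hdvd h0)
  exact (of_denom_ne_zero hden).unique hr

end HasVal

/-- At a regular fixed point of `σ` which is neither a zero nor a pole of an invariant
form `f` of weight `ν`, the multiplier `μ = σ'(a)` satisfies `μ^ν = 1`. -/
theorem multiplier_root_of_unity_at_fixed_point {k : Type*} [Field k]
    (σ : RatFunc k) (hσ : RatFuncNonconst σ)
    (f : RatFunc k) (hf : f ≠ 0) (ν : ℤ)
    (hinv : ratComp f σ * (ratDeriv σ) ^ ν = f)
    (a : k) (ha : σ.denom.eval a ≠ 0) (hfix : RatFunc.eval (RingHom.id k) a σ = a)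
    (hnum : f.num.eval a ≠ 0) (hden : f.denom.eval a ≠ 0) :
    (RatFunc.eval (RingHom.id k) a (ratDeriv σ)) ^ ν = 1 := by
  have hσa : HasVal a σ a := by
    have h := HasVal.of_denom_ne_zero ha
    rwa [← h.eval_eq, hfix] at h
  have hfa := HasVal.of_denom_ne_zero hden
  have hcomp : HasVal a (ratComp f σ) (f.num.eval a / f.denom.eval a) :=
    (hσa.aeval f.num).div (hσa.aeval f.denom) hden
  have hne : f.num.eval a / f.denom.eval a ≠ 0 := div_ne_zero hnum hden
  have hpow : HasVal a (ratDeriv σ ^ ν) 1 := by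
    have h := hfa.div hcomp hne
    rwa [div_self hne, ← eq_div_of_mul_eq (hcomp.ne_zero hne) ((mul_comm _ _).trans hinv)] at h
  have hder : HasVal a (ratDeriv σ) (RatFunc.eval (RingHom.id k) a (ratDeriv σ)) := by
    have h : HasVal a (ratDeriv σ) _ := (HasVal.of_polynomial a _).div
      (HasVal.of_polynomial a (σ.denom ^ 2)) (by simpa using ha)
    rwa [← h.eval_eq] at h
  obtain ⟨n, rfl | rfl⟩ := ν.eq_nat_or_neg
  · rw [zpow_natCast] at hpow ⊢
    exact (hder.pow n).unique hpow
  · rw [zpow_neg, zpow_natCast] at hpow ⊢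
    have h := hpow.inv one_ne_zero
    rw [inv_inv, inv_one] at h
    rw [(hder.pow n).unique h, inv_one]
end

section
/- Let k be a field of characteristic p > 0, let σ ∈ k(t) be nonconstant, let f ∈ k(t) be nonzero, and let u ∈ k(t) satisfy f ∘ σ = u^p · f. Then the logarithmic derivative f'/f is an invariant form of weight one for σ: ((f'/f) ∘ σ) · σ' = f'/f. -/
/-!
The formal derivative on `k(X)` may be computed from any representation of a rational function as a
quotient of polynomials (`ratDeriv_div`), hence is a `k`-derivation (`ratDerivation`). As `σ` is
nonconstant it is transcendental over `k`, so `f ↦ f ∘ σ` is a field homomorphism, and the chain rule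
`(f ∘ σ)' = (f' ∘ σ) σ'` holds. A `p`-th power has derivative zero in characteristic `p`, so
differentiating `f ∘ σ = u ^ p * f` gives `(f' ∘ σ) σ' = u ^ p * f'`; dividing this by the original
equation gives the claim.
-/

open Polynomial

/-- The quotient rule holds for every representation as a quotient of polynomials, not only for the
reduced one used in the definition of `ratDeriv`. -/
lemma ratDeriv_div {k : Type*} [Field k] (a b : k[X]) (hb : b ≠ 0) (f : RatFunc k)
    (hf : f = algebraMap k[X] (RatFunc k) a / algebraMap k[X] (RatFunc k) b) :
    ratDeriv f = algebraMap k[X] (RatFunc k) (derivative a * b - a * derivative b) /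
      algebraMap k[X] (RatFunc k) (b ^ 2) := by
  have hd : f.denom ≠ 0 := f.denom_ne_zero
  have hb' : algebraMap k[X] (RatFunc k) b ≠ 0 := RatFunc.algebraMap_ne_zero hb
  have hd' : algebraMap k[X] (RatFunc k) f.denom ≠ 0 := RatFunc.algebraMap_ne_zero hd
  have key : f.num * b = a * f.denom := by
    apply RatFunc.algebraMap_injective k
    rw [map_mul, map_mul, ← div_eq_div_iff hd' hb', RatFunc.num_div_denom, hf]
  have dkey := congrArg derivative key
  rw [derivative_mul, derivative_mul] at dkey
  rw [ratDeriv, div_eq_div_iff (RatFunc.algebraMap_ne_zero (pow_ne_zero 2 hd))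
    (RatFunc.algebraMap_ne_zero (pow_ne_zero 2 hb)), ← map_mul, ← map_mul]
  congr 1
  linear_combination (b * f.denom) * dkey - (derivative b * f.denom + b * derivative f.denom) * key

/-- The formal derivative `ratDeriv`, bundled as a `k`-derivation of `k(X)`. -/
noncomputable def ratDerivation (k : Type*) [Field k] : Derivation k (RatFunc k) (RatFunc k) :=
  Derivation.mk'
    { toFun := ratDeriv
      map_add' := fun f g => by
        have hf := RatFunc.algebraMap_ne_zero f.denom_ne_zero
        have hg := RatFunc.algebraMap_ne_zero g.denom_ne_zero
        rw [ratDeriv_div (f.num * g.denom + f.denom * g.num) (f.denom * g.denom)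
          (mul_ne_zero f.denom_ne_zero g.denom_ne_zero) (f + g) (by
            rw [map_add, map_mul, map_mul, map_mul, ← div_add_div _ _ hf hg,
              RatFunc.num_div_denom, RatFunc.num_div_denom]), ratDeriv, ratDeriv]
        simp only [derivative_mul, map_mul, map_add, map_sub, map_pow]
        field_simp
        ring
      map_smul' := fun c f => by
        have hf := RatFunc.algebraMap_ne_zero f.denom_ne_zero
        have hc : algebraMap k (RatFunc k) c = algebraMap k[X] (RatFunc k) (C c) := rfl
        rw [ratDeriv_div (C c * f.num) f.denom f.denom_ne_zero (c • f) (by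
            rw [map_mul, mul_div_assoc, RatFunc.num_div_denom, Algebra.smul_def, hc]), ratDeriv,
          RingHom.id_apply, Algebra.smul_def, hc]
        simp only [derivative_mul, derivative_C, map_mul, map_add, map_sub, map_pow, map_zero]
        field_simp
        ring }
    (fun f g => by
      have hf := RatFunc.algebraMap_ne_zero f.denom_ne_zero
      have hg := RatFunc.algebraMap_ne_zero g.denom_ne_zero
      have ef := f.num_div_denom
      have eg := g.num_div_denom
      change ratDeriv (f * g) = f * ratDeriv g + g * ratDeriv f
      rw [ratDeriv_div (f.num * g.num) (f.denom * g.denom)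
        (mul_ne_zero f.denom_ne_zero g.denom_ne_zero) (f * g) (by
          rw [map_mul, map_mul, ← div_mul_div_comm, ef, eg]), ratDeriv, ratDeriv]
      -- Only the bare factors `f` and `g` are rewritten as fractions, not those inside `num`, `denom`.
      generalize f.num = a at *
      generalize f.denom = b at *
      generalize g.num = c at *
      generalize g.denom = d at *
      subst ef eg
      simp only [derivative_mul, map_mul, map_add, map_sub, map_pow]
      field_simp
      ring)

@[simp]
lemma ratDerivation_apply {k : Type*} [Field k] (f : RatFunc k) :
    ratDerivation k f = ratDeriv f := rfl

/-- For nonconstant `σ`, composition with `σ` is a `k`-algebra homomorphism: `σ` is transcendental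
over `k`, so no denominator vanishes at `σ`. -/
lemma exists_algHom_ratComp {k : Type*} [Field k] (σ : RatFunc k) (hσ : RatFuncNonconst σ) :
    ∃ φ : RatFunc k →ₐ[k] RatFunc k, (∀ f, φ f = ratComp f σ) ∧
      ∀ q : k[X], φ (algebraMap k[X] (RatFunc k) q) = aeval σ q := by
  have hinj : Function.Injective (aeval σ : k[X] →ₐ[k] RatFunc k) :=
    transcendental_iff_injective.mp (σ.transcendental_of_ne_C hσ)
  refine ⟨RatFunc.liftAlgHom (aeval σ)
    (nonZeroDivisors_le_comap_nonZeroDivisors_of_injective _ hinj),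
    fun f => RatFunc.liftAlgHom_apply _ _ f, fun q => ?_⟩
  simpa using RatFunc.liftAlgHom_apply_div (aeval σ : k[X] →ₐ[k] RatFunc k)
    (nonZeroDivisors_le_comap_nonZeroDivisors_of_injective _ hinj) q 1

lemma ratDeriv_ratComp {k : Type*} [Field k] (σ : RatFunc k) (hσ : RatFuncNonconst σ)
    (f : RatFunc k) : ratDeriv (ratComp f σ) = ratComp (ratDeriv f) σ * ratDeriv σ := by
  obtain ⟨φ, hφ, hφq⟩ := exists_algHom_ratComp σ hσ
  have hd : aeval σ f.denom ≠ 0 := by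
    rw [← hφq]
    exact (map_ne_zero φ).mpr (RatFunc.algebraMap_ne_zero f.denom_ne_zero)
  rw [← hφ (ratDeriv f), ratDeriv.eq_1 f, map_div₀, hφq, hφq, ratComp, ← ratDerivation_apply,
    Derivation.leibniz_div, Derivation.map_aeval, Derivation.map_aeval]
  simp only [smul_eq_mul, ratDerivation_apply, map_sub, map_mul, map_pow]
  field_simp

/-- Key computation in Lemma 2.4: in characteristic `p > 0`, if `f ∘ σ = u^p · f` then
the logarithmic derivative `f'/f` is an invariant form of weight one for `σ`. -/
theorem logderiv_invariant {k : Type*} [Field k] (p : ℕ) [CharP k p] (hp : 0 < p)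
    (σ : RatFunc k) (hσ : RatFuncNonconst σ)
    (f : RatFunc k) (hf : f ≠ 0) (u : RatFunc k)
    (h : ratComp f σ = u ^ p * f) :
    ratComp (ratDeriv f / f) σ * ratDeriv σ = ratDeriv f / f := by
  obtain ⟨φ, hφ, -⟩ := exists_algHom_ratComp σ hσ
  have hne : u ^ p * f ≠ 0 := by
    rw [← h, ← hφ]
    exact (map_ne_zero φ).mpr hf
  have hu : u ^ p ≠ 0 := left_ne_zero_of_mul hne
  have hpk : (p : RatFunc k) = 0 := by
    rw [← map_natCast (algebraMap k (RatFunc k)), CharP.cast_eq_zero, map_zero]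
  have hup : ratDerivation k (u ^ p) = 0 := by
    rw [Derivation.leibniz_pow, nsmul_eq_mul, hpk, zero_mul]
  have hD : ratComp (ratDeriv f) σ * ratDeriv σ = u ^ p * ratDeriv f := by
    rw [← ratDeriv_ratComp σ hσ, h, ← ratDerivation_apply, Derivation.leibniz, hup]
    simp
  rw [← hφ, map_div₀, hφ, hφ, div_mul_eq_mul_div, hD, h, mul_div_mul_left _ _ hu]
end
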